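/- For every integer k ≥ 2, the CFI graphs G_k^{(0)} and G_k^{(1)} are not isomorphic: G_k^{(0)} contains a (k+1)-clique while G_k^{(1)} does not, so no graph isomorphism between them exists. -/

import Mathlib

/-!
Two vertices with the same first coordinate are never adjacent, so a `(k+1)`-clique consists of
exactly one vertex `(a, w a)` for each `a`, and adjacency says `w a m = w (a + m + 1) m.rev`
(`exists_section_of_isNClique`). The map `(a, m) ↦ (a + m + 1, m.rev)` is a fixed-point-free
involution preserving the bit `w a m`, so the total number of ones over all `a` is even
(`sum_cfiOnes_eq_zero`). In `G_k^{(1)}` exactly one of the `k + 1` strings has odd weight, so the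
total would be odd, and there is no such clique. In `G_k^{(0)}` the all-zero strings form one.
-/

/-- Number of `1`-bits (`true` entries) in a bit string `v : Fin k → Bool`. -/
def cfiOnes {k : ℕ} (v : Fin k → Bool) : ℕ :=
  (Finset.univ.filter fun i => v i = true).card

/-- Vertex set of the CFI graph `G_k^{(ℓ)}`: pairs `(a, v)` (with `a : Fin (k+1)` encoding
`a+1 ∈ {1,…,k+1}` and `v : Fin k → Bool` encoding a bit string indexed by `{1,…,k}`)
such that `v` has an even number of `1`'s when `a+1 ∈ {1,…,k−ℓ+1}` (i.e. `a + ℓ ≤ k`)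
and an odd number of `1`'s when `a+1 ∈ {k−ℓ+2,…,k+1}`. -/
def cfiVertexSet (k ℓ : ℕ) : Set (Fin (k+1) × (Fin k → Bool)) :=
  {p | if p.1.val + ℓ ≤ k then Even (cfiOnes p.2) else Odd (cfiOnes p.2)}

/-- The CFI adjacency relation: `(a, v)` and `(a', v')` are related iff there is
`m ∈ {1,…,k}` (encoded as `m : Fin k`, with value `m+1`) such that
`a' ≡ a + m (mod k+1)` and `v_m = v'_{k−m+1}` (the index `k−m+1` is `m.rev`). -/
def cfiAdjRel (k : ℕ) (p q : Fin (k+1) × (Fin k → Bool)) : Prop :=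
  ∃ m : Fin k,
    (q.1.val : ZMod (k+1)) = (p.1.val : ZMod (k+1)) + ((m.val + 1 : ℕ) : ZMod (k+1)) ∧
    p.2 m = q.2 m.rev

/-- The CFI graph `G_k^{(ℓ)}`: the graph on `cfiVertexSet k ℓ` induced by the
(symmetrized) CFI adjacency relation. -/
def cfiGraph (k ℓ : ℕ) : SimpleGraph ↥(cfiVertexSet k ℓ) :=
  SimpleGraph.induce (cfiVertexSet k ℓ) (SimpleGraph.fromRel (cfiAdjRel k))

theorem cfiAdjRel_iff {k : ℕ} (p q : Fin (k+1) × (Fin k → Bool)) :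
    cfiAdjRel k p q ↔ ∃ m : Fin k, q.1 = p.1 + m.succ ∧ p.2 m = q.2 m.rev := by
  have key : ∀ (a b : Fin (k+1)) (m : Fin k),
      ((b.val : ZMod (k+1)) = (a.val : ZMod (k+1)) + ((m.val + 1 : ℕ) : ZMod (k+1))) ↔
        b = a + m.succ := by
    intro a b m
    rw [← Nat.cast_add, ZMod.natCast_eq_natCast_iff', Fin.ext_iff, Fin.val_add, Fin.val_succ,
      Nat.mod_eq_of_lt b.isLt]
  simp only [cfiAdjRel, key]

theorem succ_add_rev_succ {k : ℕ} (m : Fin k) : m.succ + m.rev.succ = 0 := by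
  rw [Fin.ext_iff, Fin.val_add, Fin.val_succ, Fin.val_succ, Fin.val_rev]
  have h : m.val + 1 + (k - (m.val + 1) + 1) = k + 1 := by omega
  rw [h]
  simp

theorem cfiAdjRel_symm {k : ℕ} {p q : Fin (k+1) × (Fin k → Bool)} (h : cfiAdjRel k p q) :
    cfiAdjRel k q p := by
  rw [cfiAdjRel_iff] at h ⊢
  obtain ⟨m, h1, h2⟩ := h
  refine ⟨m.rev, ?_, ?_⟩
  · rw [h1, add_assoc, succ_add_rev_succ, add_zero]
  · rw [Fin.rev_rev, h2]

theorem cfiGraph_adj_iff {k ℓ : ℕ} (x y : ↥(cfiVertexSet k ℓ)) :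
    (cfiGraph k ℓ).Adj x y ↔
      ∃ m : Fin k, y.1.1 = x.1.1 + m.succ ∧ x.1.2 m = y.1.2 m.rev := by
  rw [← cfiAdjRel_iff]
  simp only [cfiGraph, SimpleGraph.comap_adj, SimpleGraph.fromRel_adj,
    Function.Embedding.subtype_apply]
  constructor
  · rintro ⟨_, h | h⟩
    · exact h
    · exact cfiAdjRel_symm h
  · refine fun h => ⟨fun he => ?_, Or.inl h⟩
    rw [cfiAdjRel_iff] at h
    obtain ⟨m, h1, -⟩ := h
    rw [he] at h1
    exact Fin.succ_ne_zero m (left_eq_add.mp h1)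

theorem cfiOnes_cast {k : ℕ} (v : Fin k → Bool) :
    (cfiOnes v : ZMod 2) = ∑ m, if v m = true then 1 else 0 := by
  simp [cfiOnes]

/-- The fixed-point-free involution `(a, m) ↦ (a + m + 1, m.rev)` pairs up the ones. -/
theorem sum_cfiOnes_eq_zero {k : ℕ} (w : Fin (k+1) → Fin k → Bool)
    (hw : ∀ a m, w a m = w (a + m.succ) m.rev) :
    ∑ a, (cfiOnes (w a) : ZMod 2) = 0 := by
  simp only [cfiOnes_cast]
  rw [← Fintype.sum_prod_type' (f := fun a m => if w a m = true then (1 : ZMod 2) else 0)]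
  refine Finset.sum_involution (fun p _ => (p.1 + p.2.succ, p.2.rev)) ?_ ?_ ?_ ?_
  · rintro ⟨a, m⟩ -
    dsimp only
    rw [← hw a m]
    exact CharTwo.add_self_eq_zero _
  · rintro ⟨a, m⟩ - - he
    exact Fin.succ_ne_zero m (add_eq_left.mp (congrArg Prod.fst he))
  · intro _ _
    exact Finset.mem_univ _
  · rintro ⟨a, m⟩ -
    simp [add_assoc, succ_add_rev_succ]

/-- A `(k+1)`-clique picks one string `w a` over each `a`, and these agree along all edges. -/
theorem exists_section_of_isNClique {k ℓ : ℕ} {s : Finset ↥(cfiVertexSet k ℓ)}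
    (hs : (cfiGraph k ℓ).IsNClique (k + 1) s) :
    ∃ w : Fin (k+1) → Fin k → Bool, (∀ a, (a, w a) ∈ cfiVertexSet k ℓ) ∧
      ∀ a m, w a m = w (a + m.succ) m.rev := by
  have hinj : Set.InjOn (fun x : ↥(cfiVertexSet k ℓ) => x.1.1) s := by
    intro x hx y hy hxy
    by_contra hne
    obtain ⟨m, h1, -⟩ := (cfiGraph_adj_iff x y).mp (hs.isClique hx hy hne)
    rw [← show x.1.1 = y.1.1 from hxy] at h1
    exact Fin.succ_ne_zero m (left_eq_add.mp h1)
  have himg : s.image (fun x => x.1.1) = Finset.univ := by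
    rw [← Finset.card_eq_iff_eq_univ, Finset.card_image_of_injOn hinj, hs.card_eq,
      Fintype.card_fin]
  have hex : ∀ a : Fin (k+1), ∃ x ∈ s, x.1.1 = a := by
    intro a
    have := Finset.mem_univ a
    rwa [← himg, Finset.mem_image] at this
  choose f hfs hfa using hex
  refine ⟨fun a => (f a).1.2, fun a => ?_, fun a m => ?_⟩
  · have h := (f a).2
    rwa [← Prod.mk.eta (p := (f a).1), hfa a] at h
  · have hne : f a ≠ f (a + m.succ) := by
      intro he
      have h := congrArg (fun x => x.1.1) he
      simp only [hfa] at h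
      exact Fin.succ_ne_zero m (left_eq_add.mp h)
    obtain ⟨m', h1, h2⟩ := (cfiGraph_adj_iff _ _).mp (hs.isClique (hfs _) (hfs _) hne)
    rw [hfa, hfa] at h1
    have : m = m' := Fin.succ_injective _ (add_left_cancel h1)
    subst this
    exact h2

theorem cfiGraph_one_cliqueFree (k : ℕ) : (cfiGraph k 1).CliqueFree (k + 1) := by
  intro s hs
  obtain ⟨w, hmem, hw⟩ := exists_section_of_isNClique hs
  have hsum := sum_cfiOnes_eq_zero w hw
  rw [Fin.sum_univ_castSucc] at hsum
  have h0 : ∀ a : Fin k, (cfiOnes (w a.castSucc) : ZMod 2) = 0 := by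
    intro a
    have h := hmem a.castSucc
    simp only [cfiVertexSet, Set.mem_ofPred_eq, Fin.val_castSucc] at h
    rw [if_pos (by omega)] at h
    exact (ZMod.natCast_eq_zero_iff_even).mpr h
  have h1 : (cfiOnes (w (Fin.last k)) : ZMod 2) = 1 := by
    have h := hmem (Fin.last k)
    simp only [cfiVertexSet, Set.mem_ofPred_eq, Fin.val_last] at h
    rw [if_neg (by omega)] at h
    exact (ZMod.natCast_eq_one_iff_odd).mpr h
  simp [h0, h1] at hsum

theorem exists_isNClique_cfiGraph_zero (k : ℕ) :
    ∃ s : Finset ↥(cfiVertexSet k 0), (cfiGraph k 0).IsNClique (k + 1) s := by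
  have hmem : ∀ a : Fin (k+1), (a, fun _ : Fin k => false) ∈ cfiVertexSet k 0 := by
    intro a
    simp [cfiVertexSet, cfiOnes, Nat.lt_succ_iff.mp a.isLt]
  let f : Fin (k+1) ↪ ↥(cfiVertexSet k 0) :=
    ⟨fun a => ⟨_, hmem a⟩, fun a b h => congrArg (fun x => x.1.1) h⟩
  refine ⟨Finset.univ.map f, ?_, by simp⟩
  intro x hx y hy hne
  obtain ⟨a, -, rfl⟩ := Finset.mem_map.mp (Finset.mem_coe.mp hx)
  obtain ⟨b, -, rfl⟩ := Finset.mem_map.mp (Finset.mem_coe.mp hy)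
  have hab : b - a ≠ 0 := fun h => hne (by rw [sub_eq_zero.mp h])
  obtain ⟨m, hm⟩ := Fin.exists_succ_eq.mpr hab
  rw [cfiGraph_adj_iff]
  refine ⟨m, ?_, rfl⟩
  rw [hm]
  exact (add_sub_cancel a b).symm

/-- For every `k ≥ 2`, the CFI graphs `G_k^{(0)}` and `G_k^{(1)}` are not
isomorphic: `G_k^{(0)}` contains a `(k+1)`-clique while `G_k^{(1)}` does not, so no graph
isomorphism between them exists. -/
theorem cfi_zero_not_iso_one (k : ℕ) (hk : 2 ≤ k) :
    (∃ s : Finset ↥(cfiVertexSet k 0), (cfiGraph k 0).IsNClique (k + 1) s) ∧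
    (∀ s : Finset ↥(cfiVertexSet k 1), ¬ (cfiGraph k 1).IsNClique (k + 1) s) ∧
    IsEmpty ((cfiGraph k 0) ≃g (cfiGraph k 1)) := by
  refine ⟨exists_isNClique_cfiGraph_zero k, cfiGraph_one_cliqueFree k, ⟨fun e => ?_⟩⟩
  obtain ⟨s, hs⟩ := exists_isNClique_cfiGraph_zero k
  exact SimpleGraph.CliqueFree.comap ⟨e.toEmbedding.toCopy⟩ (cfiGraph_one_cliqueFree k) s hs
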